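/- Let K be a field, B = K[x_1,…,x_n] with n > 0, and φ: B → B a K-algebra endomorphism with φ(x_i) = f_i, where f_1, …, f_n are algebraically independent over K. Let A = φ(B), and let K(A) ⊆ K(B) be the induced extension of fraction fields. Then [K(B) : K(A)] ≤ deg(φ)^n. -/

import Mathlib

/-- The degree of a `K`-algebra endomorphism `φ` of the polynomial ring `K[x_1, …, x_n]`:
`deg(φ) = max {deg f_1, …, deg f_n}` where `f_i = φ(x_i)` and `deg` is total degree. -/
noncomputable def polyDeg {K : Type*} [CommSemiring K] {n : ℕ}
    (φ : MvPolynomial (Fin n) K →ₐ[K] MvPolynomial (Fin n) K) : ℕ :=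
  Finset.univ.sup fun i : Fin n => (φ (MvPolynomial.X i)).totalDegree

section Aux

open MvPolynomial

theorem aux_finrank (K : Type*) [Field K] (n N : ℕ) :
    Module.finrank K (restrictTotalDegree (Fin (n+1)) K N) = (N + (n+1)).choose (n+1) := by
  classical
  have h := Module.finrank_eq_nat_card_basis
    (basisRestrictSupport K {s : Fin (n+1) →₀ ℕ | (s.sum fun _ e => e) ≤ N})
  have h2 : {s : Fin (n+1) →₀ ℕ | (s.sum fun _ e => e) ≤ N} =
     ((Finset.range (N+1)).biUnion fun k => Finset.finsuppAntidiag (Finset.univ : Finset (Fin (n+1))) k : Finset _) := by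
    ext s
    simp [Finset.mem_finsuppAntidiag, Finsupp.sum_fintype]
  unfold restrictTotalDegree
  rw [h, h2]
  rw [Nat.card_eq_fintype_card]
  simp only [Finset.coe_sort_coe, Fintype.card_coe]
  rw [Finset.card_biUnion]
  · rw [← add_assoc, ← Nat.sum_range_add_choose]
    refine Finset.sum_congr rfl fun k _ => ?_
    rw [Finset.card_finsuppAntidiag_nat_eq_choose]
    simp only [Finset.card_univ, Fintype.card_fin]
    rw [show n + 1 + k - 1 = k + n by omega]
    exact Nat.choose_symm_add
  · intro a _ b _ hab
    rw [Function.onFun, Finset.disjoint_left]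
    intro s hs hs'
    rw [Finset.mem_finsuppAntidiag] at hs hs'
    exact hab (hs.1.symm.trans hs'.1)

theorem aux_arith (m d c n : ℕ)
    (h : ∀ N, m * (N + n).choose n ≤ (d * N + c + n).choose n) : m ≤ d ^ n := by
  have h1 : ∀ N : ℕ, m * N ^ n ≤ (d * N + (c + n)) ^ n := by
    intro N
    have := Nat.mul_le_mul_left (n.factorial) (h N)
    rw [← Nat.ascFactorial_eq_factorial_mul_choose, mul_left_comm,
      ← Nat.ascFactorial_eq_factorial_mul_choose] at this
    calc m * N ^ n ≤ m * (N+1) ^ n := by gcongr; omega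
      _ ≤ m * (N+1).ascFactorial n := by gcongr; exact Nat.pow_succ_le_ascFactorial _ _
      _ ≤ _ := this
      _ ≤ _ := Nat.ascFactorial_le_pow_add _ _
      _ = _ := by ring
  have h2 : Filter.Tendsto (fun N : ℕ => ((d : ℝ) + ((c + n : ℕ) : ℝ) / N) ^ n) Filter.atTop
      (nhds (((d : ℝ) + 0) ^ n)) :=
    ((tendsto_const_div_atTop_nhds_zero_nat _).const_add _).pow _
  have h3 : (m : ℝ) ≤ ((d : ℝ) + 0) ^ n := by
    refine ge_of_tendsto h2 ?_
    filter_upwards [Filter.eventually_gt_atTop 0] with N hN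
    have hN' : (0 : ℝ) < N := by exact_mod_cast hN
    have : (m : ℝ) * N ^ n ≤ (d * N + ((c + n : ℕ) : ℝ)) ^ n := by exact_mod_cast h1 N
    have e : (d : ℝ) + ((c + n : ℕ) : ℝ) / N = (d * N + ((c + n : ℕ) : ℝ)) / N := by
      field_simp
    rw [e, div_pow, le_div_iff₀ (by positivity)]
    exact this
  rw [add_zero] at h3
  exact_mod_cast h3

theorem aux_deg {K : Type*} [Field K] {n : ℕ}
    (φ : MvPolynomial (Fin n) K →ₐ[K] MvPolynomial (Fin n) K) (p : MvPolynomial (Fin n) K) (N : ℕ)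
    (hp : p.totalDegree ≤ N) : (φ p).totalDegree ≤ polyDeg φ * N := by
  conv_lhs => rw [p.as_sum, map_sum]
  refine totalDegree_finsetSum_le fun s hs => ?_
  have hs' : (∑ i, s i) ≤ N := by
    have := (le_totalDegree hs).trans hp
    rwa [Finsupp.sum_fintype _ _ (fun _ => rfl)] at this
  rw [monomial_eq, map_mul, Finsupp.prod_fintype _ _ (by simp), map_prod,
    ← algebraMap_eq, AlgHom.commutes, ← Algebra.smul_def]
  refine (totalDegree_smul_le _ _).trans ((totalDegree_finsetProd _ _).trans ?_)
  calc _ ≤ ∑ i, polyDeg φ * s i := by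
        refine Finset.sum_le_sum fun i _ => ?_
        rw [map_pow, mul_comm]
        refine (totalDegree_pow _ _).trans (Nat.mul_le_mul_left _ ?_)
        exact Finset.le_sup (f := fun i : Fin n => (φ (MvPolynomial.X i)).totalDegree)
          (Finset.mem_univ i)
    _ = polyDeg φ * ∑ i, s i := by rw [Finset.mul_sum]
    _ ≤ _ := Nat.mul_le_mul_left _ hs'

end Aux

open MvPolynomial in
/-- Let `K` be a field, `B = K[x_1, …, x_n]` with `n > 0`, and `φ : B → B`
a `K`-algebra endomorphism with `φ(x_i) = f_i` algebraically independent over `K`.  Let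
`A = φ(B)` and let `K(A) ⊆ K(B)` be the induced extension of fraction fields (realized as
the subfield of `K(B) = FractionRing B` generated by the image of `A`).  Then
`[K(B) : K(A)] ≤ deg(φ)^n`. -/
theorem polynomial_fraction_field_degree_bound (K : Type*) [Field K] (n : ℕ) (hn : 0 < n)
    (φ : MvPolynomial (Fin n) K →ₐ[K] MvPolynomial (Fin n) K)
    (hind : AlgebraicIndependent K fun i => φ (X i)) :
    Module.rank
      (Subfield.closure
        (algebraMap (MvPolynomial (Fin n) K) (FractionRing (MvPolynomial (Fin n) K)) ''
          (φ.range : Set (MvPolynomial (Fin n) K))))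
      (FractionRing (MvPolynomial (Fin n) K))
      ≤ ((polyDeg φ : Cardinal) ^ n) := by
  classical
  have hφ : Function.Injective φ := by
    have : (aeval fun i => φ (X i)) = φ := by ext i; simp
    have h := hind
    rw [AlgebraicIndependent, this] at h
    exact h
  rw [show ((polyDeg φ : Cardinal) ^ n) = ((polyDeg φ ^ n : ℕ) : Cardinal) by push_cast; rfl]
  set F := Subfield.closure
        (algebraMap (MvPolynomial (Fin n) K) (FractionRing (MvPolynomial (Fin n) K)) ''
          (φ.range : Set (MvPolynomial (Fin n) K))) with hF
  refine rank_le fun s hs => ?_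
  obtain ⟨b, hb⟩ := IsLocalization.exist_integer_multiples_of_finite
    (nonZeroDivisors (MvPolynomial (Fin n) K)) (fun i : s => (i : FractionRing (MvPolynomial (Fin n) K)))
  choose w hw using hb
  have hb0 : algebraMap _ (FractionRing (MvPolynomial (Fin n) K)) (b : MvPolynomial (Fin n) K) ≠ 0 := by
    simp
  refine aux_arith _ _ (Finset.univ.sup fun i => (w i).totalDegree) _ fun N => ?_
  set c := (Finset.univ.sup fun i => (w i).totalDegree)
  let T : (s → restrictTotalDegree (Fin n) K N) →ₗ[K]
      restrictTotalDegree (Fin n) K (polyDeg φ * N + c) :=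
    LinearMap.codRestrict _
      (∑ i, (LinearMap.mulRight K (w i)) ∘ₗ φ.toLinearMap ∘ₗ Submodule.subtype _ ∘ₗ LinearMap.proj i)
      (by
        intro p
        rw [mem_restrictTotalDegree, LinearMap.sum_apply]
        refine totalDegree_finsetSum_le fun i _ => ?_
        refine (totalDegree_mul _ _).trans (add_le_add ?_ ?_)
        · exact aux_deg φ _ N ((mem_restrictTotalDegree _ _ _).1 (p i).2)
        · exact Finset.le_sup (f := fun i => (w i).totalDegree) (Finset.mem_univ i))
  have hT : Function.Injective T := by
    rw [injective_iff_map_eq_zero]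
    intro p hp
    have h1 : ∑ i, φ (p i) * w i = 0 := by
      have := congrArg Subtype.val hp
      simpa [T] using this
    have h2 := congrArg (algebraMap _ (FractionRing (MvPolynomial (Fin n) K))) h1
    let g : s → F := fun i => ⟨algebraMap _ _ (φ (p i)),
      Subfield.subset_closure ⟨_, ⟨_, rfl⟩, rfl⟩⟩
    have h3 : ∑ i, g i • (i : FractionRing (MvPolynomial (Fin n) K)) = 0 := by
      apply mul_left_cancel₀ hb0
      rw [mul_zero, Finset.mul_sum, ← map_zero (algebraMap (MvPolynomial (Fin n) K) _), ← h2, map_sum]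
      refine Finset.sum_congr rfl fun i _ => ?_
      rw [map_mul, hw, Subfield.smul_def, smul_eq_mul, Algebra.smul_def]
      simp only [g]
      ring
    have h4 := Fintype.linearIndependent_iff.1 hs g h3
    funext i
    have h5 := congrArg Subtype.val (h4 i)
    have h6 : φ (p i) = 0 := by simpa [g] using h5
    exact Subtype.ext (hφ (by simpa using h6))
  have := LinearMap.finrank_le_finrank_of_injective hT
  obtain ⟨k, rfl⟩ := Nat.exists_eq_succ_of_ne_zero hn.ne'
  simp only [Nat.succ_eq_add_one] at *
  rw [Module.finrank_pi_fintype, aux_finrank] at this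
  simpa [aux_finrank] using this
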